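/- Let W carry a degree assignment (d_c)_{c∈C} and a combinatorial quasi-fiber structure (g, (m_c), B) of rank r. Assume p ∤ m_c for every c ∈ C, let a ∈ k^r satisfy a_s ≠ 0 for every s, and assume that for each s ∈ {1,…,r} the restricted combinatorics W°_s is completely p-reductive with respect to ω_a|_s. Then every η ∈ A¹ with η ∧ ω_a = 0 in A²_{W,k} belongs to R_φ, i.e. η = Σ_{c∈C} m_c·b_{g(c)}·σ_c for some b ∈ k^r. (Combinatorial form of the Lemma 'fiber_p_reductive'.) -/

import Mathlib

/-!
For each branch `δ` at `P`, the functional `u ∧ v ↦ u(δ) ∑ v - v(δ) ∑ u` on `Λ² A_P` kills the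
cyclic relations in `I_P`. Evaluating it on `η ∧ ω = 0` gives the resonance condition at `δ`,
`η(δ) ∑ μ(δ, δ') ω(δ') = ω(δ) ∑ μ(δ, δ') η(δ')`.

Suppose that `ω` has no zero coordinate and that `η = l₀ ω`, `η = l₁ ω` on the two classes of a
partition that meet at a `p`-transversal point `P`. At the distinguished branch `δ` the terms of
the first class cancel, and the resonance condition becomes
`ω(δ) (l₀ - l₁) ∑_{δ' in the second class} μ(δ, δ') ω(δ') = 0`, so that `l₀ = l₁`. A complete
reduction of a quasi-fiber therefore makes `η` a multiple of `ω` on the whole quasi-fiber.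
When `a_s = 0` no reduction step is possible, so the quasi-fiber is a single component and there is
nothing to prove.
-/

open scoped Classical

/-- The weak combinatorial type of a plane projective curve. -/
structure WeakComb (p : ℕ) where
  /-- the set of irreducible components -/
  C : Type
  [fintypeC : Fintype C]
  [decEqC : DecidableEq C]
  [nonemptyC : Nonempty C]
  /-- the set of singular points -/
  S : Type
  [fintypeS : Fintype S]
  [decEqS : DecidableEq S]
  /-- the local branches at each singular point -/
  Δ : S → Type
  [fintypeΔ : ∀ P, Fintype (Δ P)]
  [decEqΔ : ∀ P, DecidableEq (Δ P)]
  /-- each branch belongs to a component -/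
  φ : ∀ P, Δ P → C
  /-- local intersection multiplicities of pairs of branches -/
  μ : ∀ P, Δ P → Δ P → ℕ
  μ_symm : ∀ P δ δ', φ P δ ≠ φ P δ' → μ P δ δ' = μ P δ' δ
  μ_pos : ∀ P δ δ', φ P δ ≠ φ P δ' → 0 < μ P δ δ'

attribute [instance] WeakComb.fintypeC WeakComb.decEqC WeakComb.nonemptyC
attribute [instance] WeakComb.fintypeS WeakComb.decEqS WeakComb.fintypeΔ WeakComb.decEqΔ

namespace WeakComb

variable {p : ℕ} (W : WeakComb p)

/-- μ_P(δ,δ') with the convention that it vanishes on pairs of branches of the same component. -/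
def muk (P : W.S) (δ δ' : W.Δ P) : ℕ :=
  if W.φ P δ = W.φ P δ' then 0 else W.μ P δ δ'

/-- μ_P(δ, j): the multiplicity of intersection of the branch δ with the component j. -/
def muC (P : W.S) (δ : W.Δ P) (j : W.C) : ℕ :=
  ∑ δ' : W.Δ P, if W.φ P δ' = j then W.muk P δ δ' else 0

/-- A degree assignment: positive degrees satisfying the Bezout condition. -/
def IsDegree (d : W.C → ℕ) : Prop :=
  (∀ i, 0 < d i) ∧
  ∀ i j, i ≠ j →
    d i * d j = ∑ P : W.S, ∑ δ : W.Δ P, if W.φ P δ = i then W.muC P δ j else 0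

/-- The basis vector σ_i of A¹ = (C → ZMod p). -/
noncomputable def sigma (i : W.C) : W.C → ZMod p := Pi.single i 1

/-- The basis vector ψ_P^δ of A_P = (Δ_P → ZMod p). -/
noncomputable def psi (P : W.S) (δ : W.Δ P) : W.Δ P → ZMod p := Pi.single δ 1

/-- ψ_P^δ ∧ ψ_P^δ' as an element of Λ² A_P. -/
noncomputable def psiW (P : W.S) (δ δ' : W.Δ P) : ⋀[ZMod p]^2 (W.Δ P → ZMod p) :=
  ⟨ExteriorAlgebra.ιMulti (ZMod p) 2 ![W.psi P δ, W.psi P δ'],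
   ExteriorAlgebra.ιMulti_range (ZMod p) 2 (Set.mem_range_self _)⟩

/-- The subspace I_P of Λ² A_P. -/
noncomputable def IP (P : W.S) : Submodule (ZMod p) (⋀[ZMod p]^2 (W.Δ P → ZMod p)) :=
  Submodule.span (ZMod p)
    ({x | ∃ δ1 δ2 δ3 : W.Δ P, x = W.psiW P δ1 δ2 + W.psiW P δ2 δ3 + W.psiW P δ3 δ1} ∪
     {x | (∀ δ δ' : W.Δ P, W.φ P δ = W.φ P δ') ∧ ∃ δ1 δ2 : W.Δ P, x = W.psiW P δ1 δ2})

/-- The degree-two part A² = A^{2,0} ⊕ A^{2,∞} of the Combinatorial Aomoto algebra. -/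
abbrev A2 (d : W.C → ℕ) : Type :=
  ((P : W.S) → (⋀[ZMod p]^2 (W.Δ P → ZMod p)) ⧸ W.IP P) ×
  ({i : W.C // p ∣ d i} → ZMod p)

/-- The wedge product A¹ × A¹ → A², extending σ_i ∧ σ_j bilinearly. -/
noncomputable def wedge (d : W.C → ℕ) (α β : W.C → ZMod p) : W.A2 d :=
  (fun P => ∑ δ : W.Δ P, ∑ δ' : W.Δ P,
      (α (W.φ P δ) * β (W.φ P δ') * (W.muk P δ δ' : ZMod p)) •
        Submodule.Quotient.mk (W.psiW P δ δ'),
   fun i => α i.1 * (∑ j : W.C, (d j : ZMod p) * β j)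
          - β i.1 * (∑ j : W.C, (d j : ZMod p) * α j))

/-- The linear map ·∧α : A¹ → A², β ↦ β ∧ α. -/
noncomputable def wedgeL (d : W.C → ℕ) (α : W.C → ZMod p) :
    (W.C → ZMod p) →ₗ[ZMod p] W.A2 d where
  toFun β := W.wedge d β α
  map_add' β γ := by
    refine Prod.ext ?_ ?_
    · funext P
      simp only [wedge, Pi.add_apply, Prod.fst_add]
      rw [← Finset.sum_add_distrib]
      refine Finset.sum_congr rfl fun δ _ => ?_
      rw [← Finset.sum_add_distrib]
      refine Finset.sum_congr rfl fun δ' _ => ?_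
      rw [← add_smul, add_mul, add_mul]
    · funext i
      simp only [wedge, Pi.add_apply, Prod.snd_add]
      rw [show (∑ x : W.C, (d x : ZMod p) * (β x + γ x))
            = (∑ x : W.C, (d x : ZMod p) * β x) + ∑ x : W.C, (d x : ZMod p) * γ x by
        rw [← Finset.sum_add_distrib]; exact Finset.sum_congr rfl fun x _ => by ring]
      ring
  map_smul' c β := by
    refine Prod.ext ?_ ?_
    · funext P
      simp only [wedge, Pi.smul_apply, smul_eq_mul, RingHom.id_apply, Prod.smul_fst]
      rw [Finset.smul_sum]
      refine Finset.sum_congr rfl fun δ _ => ?_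
      rw [Finset.smul_sum]
      refine Finset.sum_congr rfl fun δ' _ => ?_
      rw [smul_smul]
      ring_nf
    · funext i
      simp only [wedge, Pi.smul_apply, smul_eq_mul, RingHom.id_apply, Prod.smul_snd]
      rw [show (∑ x : W.C, (d x : ZMod p) * (c * β x)) = c * ∑ x : W.C, (d x : ZMod p) * β x by
        rw [Finset.mul_sum]; exact Finset.sum_congr rfl fun x _ => by ring]
      ring

/-- The kernel of ·∧α : A¹ → A². -/
noncomputable def wedgeKer (d : W.C → ℕ) (α : W.C → ZMod p) :
    Submodule (ZMod p) (W.C → ZMod p) :=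
  LinearMap.ker (W.wedgeL d α)

/-- H¹ of the Combinatorial Aomoto complex with differential ·∧α. -/
noncomputable abbrev H1 (d : W.C → ℕ) (α : W.C → ZMod p) :=
  (W.wedgeKer d α) ⧸
    (Submodule.comap (W.wedgeKer d α).subtype (Submodule.span (ZMod p) {α}))

end WeakComb

namespace WeakComb

variable {p : ℕ} (W : WeakComb p)

/-- The resonance condition for (α,β) at the branch δ of the point P. -/
def ResCond (α β : W.C → ZMod p) (P : W.S) (δ : W.Δ P) : Prop :=
  β (W.φ P δ) * (∑ j : W.C, (W.muC P δ j : ZMod p) * α j)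
    - α (W.φ P δ) * (∑ j : W.C, (W.muC P δ j : ZMod p) * β j) = 0

/-- P is a p-transversal point for the pair of components i ≠ j. -/
def PTransPoint (P : W.S) (i j : W.C) : Prop :=
  i ≠ j ∧ (∀ δ : W.Δ P, W.φ P δ = i ∨ W.φ P δ = j) ∧
  (∃ δ : W.Δ P, W.φ P δ = i) ∧ (∃ δ : W.Δ P, W.φ P δ = j) ∧
  ((∃ δ : W.Δ P, W.φ P δ = i ∧ ((W.muC P δ j : ZMod p) ≠ 0)) ∨
   (∃ δ : W.Δ P, W.φ P δ = j ∧ ((W.muC P δ i : ZMod p) ≠ 0)))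

/-- The components i and j are p-transversal at a point. -/
def PTransComponents (i j : W.C) : Prop := ∃ P : W.S, W.PTransPoint P i j

/-- α is non-coordinate if all its coordinates are nonzero. -/
def NonCoordinate (α : W.C → ZMod p) : Prop := ∀ i, α i ≠ 0

end WeakComb

/-- The setoid (partition) obtained from s by merging the classes of c₀ and c₁. -/
def mergeSetoid {α : Type*} (s : Setoid α) (c₀ c₁ : α) : Setoid α :=
  Relation.EqvGen.setoid (fun a b => s.r a b ∨ (a = c₀ ∧ b = c₁))

namespace WeakComb

variable {p : ℕ} (W : WeakComb p)

/-- W is p-transversal at P with respect to (α, π), where the surjection π is encoded by the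
setoid s of its fibres; the two classes π(φ_P(Δ_P)) = {i',j'} are those of c₀ and c₁. -/
def PTransversalAt (α : W.C → ZMod p) (s : Setoid W.C) (P : W.S) (c₀ c₁ : W.C) : Prop :=
  ¬ s.r c₀ c₁ ∧
  (∀ δ : W.Δ P, s.r (W.φ P δ) c₀ ∨ s.r (W.φ P δ) c₁) ∧
  (∃ δ : W.Δ P, s.r (W.φ P δ) c₀) ∧ (∃ δ : W.Δ P, s.r (W.φ P δ) c₁) ∧
  ∃ δ : W.Δ P, s.r (W.φ P δ) c₀ ∧
    (∑ δ' : W.Δ P, if s.r (W.φ P δ') c₁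
        then (W.muk P δ δ' : ZMod p) * α (W.φ P δ') else 0) ≠ 0

/-- A p-reduction step with respect to α. -/
def RedStep (α : W.C → ZMod p) (s s' : Setoid W.C) : Prop :=
  ∃ (P : W.S) (c₀ c₁ : W.C), W.PTransversalAt α s P c₀ c₁ ∧ s' = mergeSetoid s c₀ c₁

/-- W is completely p-reductive with respect to α: starting from the identity partition (⊥),
some finite sequence of p-reduction steps reaches the one-class partition (⊤). -/
def CompletelyPReductive (α : W.C → ZMod p) : Prop :=
  Relation.ReflTransGen (W.RedStep α) ⊥ ⊤

/-- β is π-proportional to α, for the surjection π encoded by the setoid s: on each class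
of s, β is a scalar multiple of α. -/
def Proportional (s : Setoid W.C) (α β : W.C → ZMod p) : Prop :=
  ∀ c : W.C, ∃ l : ZMod p, ∀ c', s.r c c' → β c' = l * α c'

end WeakComb

/-- A combinatorial quasi-fiber structure of rank r on W. -/
structure QuasiFiber {p : ℕ} (W : WeakComb p) (r : ℕ) where
  /-- which quasi-fiber each component belongs to -/
  g : W.C → Fin r
  g_surj : Function.Surjective g
  /-- multiplicities of components inside the quasi-fibers -/
  m : W.C → ℕ
  m_pos : ∀ c, 0 < m c
  /-- the set of base points -/
  B : Set W.S
  fiber_off_base : ∀ P : W.S, P ∉ B → ∀ δ δ' : W.Δ P, g (W.φ P δ) = g (W.φ P δ')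

namespace WeakComb

variable {p : ℕ} (W : WeakComb p) {r : ℕ}

/-- M_s(δ) for a branch δ at a base point P. -/
noncomputable def Mcoef (F : QuasiFiber W r) (P : W.S) (δ : W.Δ P) (s : Fin r) : ZMod p :=
  ∑ δ' : W.Δ P,
    if W.φ P δ' ≠ W.φ P δ ∧ F.g (W.φ P δ') = s
      then ((F.m (W.φ P δ') * W.μ P δ δ' : ℕ) : ZMod p) else 0

/-- ω_a = Σ_c m_c · a_{g(c)} · σ_c ∈ A¹. -/
noncomputable def omega (F : QuasiFiber W r) (a : Fin r → ZMod p) : W.C → ZMod p :=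
  fun c => (F.m c : ZMod p) * a (F.g c)

/-- The restricted combinatorics W°_s of the quasi-fiber s. -/
noncomputable def restrict (F : QuasiFiber W r) (s : Fin r) : WeakComb p where
  C := {c : W.C // F.g c = s}
  fintypeC := Fintype.ofFinite _
  decEqC := inferInstance
  nonemptyC := by obtain ⟨c, hc⟩ := F.g_surj s; exact ⟨⟨c, hc⟩⟩
  S := {P : W.S // Nonempty (W.Δ P) ∧ ∀ δ : W.Δ P, F.g (W.φ P δ) = s}
  fintypeS := Fintype.ofFinite _
  decEqS := inferInstance
  Δ := fun P => W.Δ P.1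
  fintypeΔ := fun P => inferInstance
  decEqΔ := fun P => inferInstance
  φ := fun P δ => ⟨W.φ P.1 δ, P.2.2 δ⟩
  μ := fun P δ δ' => W.μ P.1 δ δ'
  μ_symm := fun P δ δ' h => W.μ_symm P.1 δ δ' (fun e => h (Subtype.ext e))
  μ_pos := fun P δ δ' h => W.μ_pos P.1 δ δ' (fun e => h (Subtype.ext e))

/-- The restriction ω_a|_s of ω_a to the restricted combinatorics W°_s. -/
noncomputable def omegaRes (F : QuasiFiber W r) (a : Fin r → ZMod p) (s : Fin r) :
    (W.restrict F s).C → ZMod p :=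
  fun c => (F.m c.1 : ZMod p) * a s

end WeakComb

section Statements

open WeakComb

variable {p : ℕ} [Fact p.Prime]

theorem mergeSetoid_le {α : Type*} {s t : Setoid α} {c₀ c₁ : α} (hst : s ≤ t) (h : t c₀ c₁) :
    mergeSetoid s c₀ c₁ ≤ t := by
  refine Setoid.eqvGen_le ?_
  rintro x y (hxy | ⟨rfl, rfl⟩)
  exacts [hst hxy, h]

namespace WeakComb

section Resonance

variable {n : ℕ} {W : WeakComb n}

/-- The functional `u ∧ v ↦ u(δ₀) ∑ v - v(δ₀) ∑ u` on `Λ² A_P`, which detects the resonance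
condition at the branch `δ₀`. It is encoded as the pairing with the element
`δ₀* ∧ ∑ δ*` of the exterior square of the dual space. -/
noncomputable def branchFunctional (P : W.S) (δ₀ : W.Δ P) :
    ⋀[ZMod n]^2 (W.Δ P → ZMod n) →ₗ[ZMod n] ZMod n :=
  exteriorPower.pairingDual (ZMod n) (W.Δ P → ZMod n) 2
    (exteriorPower.ιMulti (ZMod n) 2 ![LinearMap.proj δ₀, ∑ δ : W.Δ P, LinearMap.proj δ])

theorem branchFunctional_psiW (P : W.S) (δ₀ δ δ' : W.Δ P) :
    branchFunctional P δ₀ (W.psiW P δ δ') =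
      (if δ = δ₀ then 1 else 0) - (if δ' = δ₀ then 1 else 0) := by
  have hpsiW : W.psiW P δ δ' = exteriorPower.ιMulti (ZMod n) 2 ![W.psi P δ, W.psi P δ'] := rfl
  rw [hpsiW, branchFunctional, exteriorPower.pairingDual_ιMulti_ιMulti, Matrix.det_fin_two]
  simp [psi, Pi.single_apply, eq_comm]

theorem IP_le_ker_branchFunctional {P : W.S} (hP : ¬ ∀ δ δ' : W.Δ P, W.φ P δ = W.φ P δ')
    (δ₀ : W.Δ P) : W.IP P ≤ LinearMap.ker (branchFunctional P δ₀) := by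
  refine Submodule.span_le.2 ?_
  rintro x (⟨δ₁, δ₂, δ₃, rfl⟩ | ⟨hsingle, -⟩)
  · simp only [SetLike.mem_coe, LinearMap.mem_ker, map_add, branchFunctional_psiW]
    ring
  · exact absurd hsingle hP

theorem muk_eq_zero {P : W.S} {δ δ' : W.Δ P} (h : W.φ P δ = W.φ P δ') : W.muk P δ δ' = 0 :=
  if_pos h

theorem muk_comm (P : W.S) (δ δ' : W.Δ P) : W.muk P δ δ' = W.muk P δ' δ := by
  by_cases h : W.φ P δ = W.φ P δ'
  · rw [muk_eq_zero h, muk_eq_zero h.symm]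
  · simpa only [muk, if_neg h, if_neg (Ne.symm h)] using W.μ_symm P δ δ' h

theorem sum_muC_mul (α : W.C → ZMod n) (P : W.S) (δ : W.Δ P) :
    ∑ j, (W.muC P δ j : ZMod n) * α j = ∑ δ', (W.muk P δ δ' : ZMod n) * α (W.φ P δ') := by
  simp only [muC, Nat.cast_sum, Nat.cast_ite, Nat.cast_zero, Finset.sum_mul, ite_mul, zero_mul]
  rw [Finset.sum_comm]
  simp only [Finset.sum_ite_eq, Finset.mem_univ, if_true]

theorem resCond_iff {α β : W.C → ZMod n} {P : W.S} {δ : W.Δ P} :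
    W.ResCond α β P δ ↔
      β (W.φ P δ) * ∑ δ', (W.muk P δ δ' : ZMod n) * α (W.φ P δ') =
        α (W.φ P δ) * ∑ δ', (W.muk P δ δ' : ZMod n) * β (W.φ P δ') := by
  rw [ResCond, sum_muC_mul, sum_muC_mul, sub_eq_zero]

theorem branchFunctional_sum_smul_psiW (P : W.S) (δ₀ : W.Δ P) (x : W.Δ P → W.Δ P → ZMod n) :
    branchFunctional P δ₀ (∑ δ, ∑ δ', x δ δ' • W.psiW P δ δ') =
      ∑ δ, x δ₀ δ - ∑ δ, x δ δ₀ := by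
  simp only [map_sum, map_smul, branchFunctional_psiW, smul_eq_mul, mul_sub, mul_ite, mul_one,
    mul_zero, Finset.sum_sub_distrib, Finset.sum_ite_eq', Finset.mem_univ, if_true]
  rw [Finset.sum_comm]
  simp only [Finset.sum_ite_eq', Finset.mem_univ, if_true]

theorem resCond_of_wedge_fst_eq_zero {d : W.C → ℕ} {α β : W.C → ZMod n}
    (h : (W.wedge d β α).1 = 0) (P : W.S) (δ : W.Δ P) : W.ResCond α β P δ := by
  rw [resCond_iff]
  by_cases hP : ∀ δ δ' : W.Δ P, W.φ P δ = W.φ P δ'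
  · simp only [muk_eq_zero (hP _ _), Nat.cast_zero, zero_mul, Finset.sum_const_zero, mul_zero]
  have hmem : ∑ δ, ∑ δ', (β (W.φ P δ) * α (W.φ P δ') * (W.muk P δ δ' : ZMod n)) •
      W.psiW P δ δ' ∈ W.IP P := by
    rw [← Submodule.Quotient.mk_eq_zero, ← Submodule.mkQ_apply]
    simpa only [wedge, map_sum, map_smul, Submodule.mkQ_apply, Pi.zero_apply] using congrFun h P
  have hval := LinearMap.mem_ker.1 (IP_le_ker_branchFunctional hP δ hmem)
  rw [branchFunctional_sum_smul_psiW, sub_eq_zero] at hval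
  simp only [Finset.mul_sum]
  calc ∑ δ', β (W.φ P δ) * (W.muk P δ δ' * α (W.φ P δ'))
      = ∑ δ', β (W.φ P δ) * α (W.φ P δ') * W.muk P δ δ' := by congr! 1; ring
    _ = ∑ δ', β (W.φ P δ') * α (W.φ P δ) * W.muk P δ' δ := hval
    _ = ∑ δ', α (W.φ P δ) * (W.muk P δ δ' * β (W.φ P δ')) := by
        congr! 1 with δ'
        rw [muk_comm P δ δ']
        ring

end Resonance

section Restriction

variable {n r : ℕ} {W : WeakComb n} {F : QuasiFiber W r} {s : Fin r}

/-- The inclusion of the components of the quasi-fiber `s` into the components of `W`, along which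
elements of `A¹` are restricted. -/
def restrictIncl (F : QuasiFiber W r) (s : Fin r) : (W.restrict F s).C → W.C :=
  Subtype.val

theorem restrictIncl_injective : Function.Injective (restrictIncl F s) :=
  Subtype.val_injective

theorem muk_restrict (P : (W.restrict F s).S) (δ δ' : W.Δ P.1) :
    (W.restrict F s).muk P δ δ' = W.muk P.1 δ δ' :=
  if_congr restrictIncl_injective.eq_iff.symm rfl rfl

theorem sum_muk_restrict_mul (α : W.C → ZMod n) (P : (W.restrict F s).S) (δ : W.Δ P.1) :
    ∑ δ', ((W.restrict F s).muk P δ δ' : ZMod n) *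
        (α ∘ restrictIncl F s) ((W.restrict F s).φ P δ') =
      ∑ δ' : W.Δ P.1, (W.muk P.1 δ δ' : ZMod n) * α (W.φ P.1 δ') :=
  Finset.sum_congr rfl fun δ' _ ↦
    congrArg (fun k : ℕ ↦ (k : ZMod n) * α (W.φ P.1 δ')) (muk_restrict P δ δ')

theorem ResCond.restrict {α β : W.C → ZMod n} {P : (W.restrict F s).S} {δ : W.Δ P.1}
    (h : W.ResCond α β P.1 δ) :
    (W.restrict F s).ResCond (α ∘ restrictIncl F s) (β ∘ restrictIncl F s) P δ :=
  resCond_iff.2 <| (congrArg _ (sum_muk_restrict_mul α P δ)).trans <|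
    (resCond_iff.1 h).trans (congrArg _ (sum_muk_restrict_mul β P δ).symm)

theorem omega_comp_restrictIncl (a : Fin r → ZMod n) :
    W.omega F a ∘ restrictIncl F s = W.omegaRes F a s :=
  funext fun c ↦ congrArg (fun t ↦ (F.m c.1 : ZMod n) * a t) c.2

theorem omegaRes_eq_smul (a : Fin r → ZMod n) :
    W.omegaRes F a s = a s • ((fun c ↦ (F.m c : ZMod n)) ∘ restrictIncl F s) :=
  funext fun _ ↦ mul_comm _ _

end Restriction

section Reduction

theorem not_redStep_zero {n : ℕ} {W : WeakComb n} {s s' : Setoid W.C} : ¬ W.RedStep 0 s s' := by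
  rintro ⟨P, c₀, c₁, ⟨-, -, -, -, δ, -, hne⟩, -⟩
  simp at hne

theorem CompletelyPReductive.subsingleton {n : ℕ} {W : WeakComb n}
    (hred : W.CompletelyPReductive 0) : Subsingleton W.C := by
  obtain hbot | ⟨s, hstep, -⟩ := Relation.ReflTransGen.cases_head hred
  · exact ⟨fun c c' ↦ show (⊥ : Setoid W.C) c c' from hbot ▸ trivial⟩
  · exact absurd hstep not_redStep_zero

variable {W : WeakComb p} {α β : W.C → ZMod p} {s s' : Setoid W.C}

theorem proportional_iff_le_ker_div (hα : W.NonCoordinate α) :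
    W.Proportional s α β ↔ s ≤ Setoid.ker (β / α) := by
  constructor
  · intro h c c' hcc'
    obtain ⟨l, hl⟩ := h c
    have hratio : ∀ x, s.r c x → β x / α x = l := fun x hx ↦
      (div_eq_iff (hα x)).2 (hl x hx)
    exact (hratio c (s.refl c)).trans (hratio c' hcc').symm
  · intro h c
    exact ⟨β c / α c, fun c' hcc' ↦ (div_eq_iff (hα c')).1 (h hcc').symm⟩

theorem PTransversalAt.scalar_eq {P : W.S} {c₀ c₁ : W.C} (hP : W.PTransversalAt α s P c₀ c₁)
    (hα : W.NonCoordinate α) (hres : ∀ δ, W.ResCond α β P δ) {l₀ l₁ : ZMod p}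
    (h₀ : ∀ c, s.r c c₀ → β c = l₀ * α c) (h₁ : ∀ c, s.r c c₁ → β c = l₁ * α c) : l₀ = l₁ := by
  obtain ⟨-, hcover, -, -, δ, hδ, hne⟩ := hP
  have hsum : l₀ * ∑ δ', (W.muk P δ δ' : ZMod p) * α (W.φ P δ') =
      ∑ δ', (W.muk P δ δ' : ZMod p) * β (W.φ P δ') := by
    have h := resCond_iff.1 (hres δ)
    rw [h₀ _ hδ, mul_right_comm, mul_comm] at h
    exact mul_left_cancel₀ (hα _) h
  have hclass : (l₀ - l₁) * (∑ δ', if s.r (W.φ P δ') c₁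
      then (W.muk P δ δ' : ZMod p) * α (W.φ P δ') else 0) = 0 := by
    refine Eq.trans ?_ (sub_eq_zero.2 hsum)
    rw [Finset.mul_sum, Finset.mul_sum, ← Finset.sum_sub_distrib]
    congr! 1 with δ'
    split_ifs with hδ'
    · rw [h₁ _ hδ']
      ring
    · rw [h₀ _ ((hcover δ').resolve_right hδ')]
      ring
  exact sub_eq_zero.1 ((mul_eq_zero.1 hclass).resolve_right hne)

theorem Proportional.redStep (h : W.Proportional s α β) (hα : W.NonCoordinate α)
    (hres : ∀ P δ, W.ResCond α β P δ) (hstep : W.RedStep α s s') : W.Proportional s' α β := by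
  obtain ⟨P, c₀, c₁, hP, rfl⟩ := hstep
  have hle := (proportional_iff_le_ker_div hα).1 h
  have hclass : ∀ {c c₀}, s.r c c₀ → β c = β c₀ / α c₀ * α c := fun hc ↦
    (div_eq_iff (hα _)).1 (hle hc)
  rw [proportional_iff_le_ker_div hα]
  exact mergeSetoid_le hle (hP.scalar_eq hα (hres P) (fun _ ↦ hclass) fun _ ↦ hclass)

theorem CompletelyPReductive.proportional_top (hred : W.CompletelyPReductive α)
    (hα : W.NonCoordinate α) (hres : ∀ P δ, W.ResCond α β P δ) : W.Proportional ⊤ α β := by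
  suffices ∀ s, Relation.ReflTransGen (W.RedStep α) ⊥ s → W.Proportional s α β from this ⊤ hred
  intro s hs
  induction hs with
  | refl => exact (proportional_iff_le_ker_div hα).2 bot_le
  | tail _ hstep ih => exact ih.redStep hα hres hstep

theorem CompletelyPReductive.exists_eq_smul {a : ZMod p}
    (hred : W.CompletelyPReductive (a • α)) (hα : W.NonCoordinate α)
    (hres : ∀ P δ, W.ResCond (a • α) β P δ) : ∃ l : ZMod p, β = l • α := by
  obtain ⟨c₀⟩ := W.nonemptyC
  obtain rfl | ha := eq_or_ne a 0
  · rw [zero_smul] at hred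
    have := hred.subsingleton
    refine ⟨β c₀ / α c₀, funext fun c ↦ ?_⟩
    rw [Subsingleton.elim c c₀]
    exact (div_mul_cancel₀ _ (hα c₀)).symm
  · obtain ⟨l, hl⟩ := hred.proportional_top (fun c ↦ mul_ne_zero ha (hα c)) hres c₀
    exact ⟨l * a, funext fun c ↦ (hl c trivial).trans (mul_assoc l a (α c)).symm⟩

end Reduction

end WeakComb

theorem stmt12_general (W : WeakComb p) (d : W.C → ℕ) {r : ℕ} (F : QuasiFiber W r)
    (hm : ∀ c : W.C, ¬ p ∣ F.m c) (a : Fin r → ZMod p)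
    (hred : ∀ s : Fin r, (W.restrict F s).CompletelyPReductive (W.omegaRes F a s))
    (η : W.C → ZMod p) (hη : (W.wedge d η (W.omega F a)).1 = 0) :
    ∃ b : Fin r → ZMod p, η = W.omega F b := by
  have hfiber (s : Fin r) : ∃ l : ZMod p, η ∘ restrictIncl F s =
      l • ((fun c ↦ (F.m c : ZMod p)) ∘ restrictIncl F s) := by
    refine CompletelyPReductive.exists_eq_smul (a := a s) ?_
      (fun c ↦ mt (ZMod.natCast_eq_zero_iff _ _).1 (hm c.1)) fun P δ ↦ ?_
    · exact omegaRes_eq_smul a ▸ hred s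
    · rw [← omegaRes_eq_smul, ← omega_comp_restrictIncl]
      exact (resCond_of_wedge_fst_eq_zero hη P.1 δ).restrict
  choose b hb using hfiber
  exact ⟨b, funext fun c ↦ (congrFun (hb (F.g c)) ⟨c, rfl⟩).trans (mul_comm _ _)⟩

/-- Lemma `fiber_p_reductive`. -/
theorem stmt12 (W : WeakComb p) (d : W.C → ℕ) (hd : W.IsDegree d)
    {r : ℕ} (F : QuasiFiber W r)
    (hm : ∀ c : W.C, ¬ p ∣ F.m c)
    (a : Fin r → ZMod p) (ha : ∀ s, a s ≠ 0)
    (hred : ∀ s : Fin r,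
      (W.restrict F s).CompletelyPReductive (W.omegaRes F a s)) :
    ∀ η : W.C → ZMod p, W.wedge d η (W.omega F a) = 0 →
      ∃ b : Fin r → ZMod p, η = W.omega F b := by
  exact fun η hη ↦ stmt12_general W d F hm a hred η (congrArg Prod.fst hη)

end Statements
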